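/- arXiv:1605.02541 — 5 statements merged into one kernel-verified Lean document; each statement's English description precedes it below -/
import Mathlib

section
/- Let T be a real-valued random variable and define J(m) = E(|m - T| / |T|), with the conventions a/0 = +∞ for a ≠ 0 and 0/0 = 1. Then J(m) < ∞ for all real m if and only if (1) P(T = 0) = 0, and (2) both series Σ_{k≥1} k·P(T ∈ (1/(k+1), 1/k]) and Σ_{k≥1} k·P(T ∈ [-1/k, -1/(k+1))) converge. Moreover, if any of these conditions fails, then J(m) = +∞ for all m ≠ 0. -/
open MeasureTheory ENNReal Filter Set

/-- The MAPE pointwise ratio `|m - t| / |t|` with the conventions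
`a/0 = ∞` for `a ≠ 0` and `0/0 = 1`, valued in `[0, ∞]`. -/
noncomputable def mapeRatio (m t : ℝ) : ℝ≥0∞ :=
  if t = 0 then (if m = 0 then 1 else ⊤) else ENNReal.ofReal (|m - t| / |t|)

/-!
By the triangle inequality `|m| / |t|` and `|m - t| / |t|` differ by at most `1`, so on a finite
measure `J m < ∞` for some `m ≠ 0` exactly when `1 / |T|` has finite integral, where `1 / 0 = ∞`.
Off `T = 0`, `1 / |T|` is within `1` of its integer part, which takes the value `k ≥ 1` exactly
when `T ∈ (1 / (k + 1), 1 / k]` or `-T ∈ (1 / (k + 1), 1 / k]`.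
-/

section Floor

variable {K : Type*} [Field K] [LinearOrder K] [IsStrictOrderedRing K] [FloorSemiring K]

lemma natFloor_inv_eq_iff {t : K} {k : ℕ} (hk : k ≠ 0) :
    ⌊t⁻¹⌋₊ = k ↔ t ∈ Ioc (1 / ((k : K) + 1)) (1 / (k : K)) := by
  have hk_pos : (0 : K) < k := Nat.cast_pos.mpr hk.bot_lt
  have hk_succ_pos : (0 : K) < k + 1 := by positivity
  rw [Nat.floor_eq_iff' hk, mem_Ioc, one_div, one_div, and_comm]
  refine ⟨fun ⟨hlt, hle⟩ => ?_, fun ⟨hlt, hle⟩ => ?_⟩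
  · have ht : 0 < t := inv_pos.mp (hk_pos.trans_le hle)
    exact ⟨inv_lt_of_inv_lt₀ ht hlt, le_inv_of_le_inv₀ hk_pos hle⟩
  · have ht : 0 < t := (inv_pos.mpr hk_succ_pos).trans hlt
    exact ⟨inv_lt_of_inv_lt₀ hk_succ_pos hlt, le_inv_of_le_inv₀ ht hle⟩

end Floor

lemma natFloor_inv_le_inv_enorm (t : ℝ) : (⌊t⁻¹⌋₊ : ℝ≥0∞) ≤ ‖t‖ₑ⁻¹ := by
  rcases eq_or_ne t 0 with rfl | ht
  · simp
  calc (⌊t⁻¹⌋₊ : ℝ≥0∞) ≤ ⌊‖t⁻¹‖⌋₊ := by gcongr; exact Real.le_norm_self _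
    _ = ENNReal.ofReal ⌊‖t⁻¹‖⌋₊ := (ENNReal.ofReal_natCast _).symm
    _ ≤ ENNReal.ofReal ‖t⁻¹‖ := ENNReal.ofReal_le_ofReal (Nat.floor_le (norm_nonneg _))
    _ = ‖t‖ₑ⁻¹ := by rw [ofReal_norm, enorm_inv ht]

lemma inv_enorm_le_natFloor_inv_add {t : ℝ} (ht : t ≠ 0) :
    ‖t‖ₑ⁻¹ ≤ ⌊t⁻¹⌋₊ + ⌊(-t)⁻¹⌋₊ + 1 := by
  have h_abs : |t⁻¹| ≤ ⌊t⁻¹⌋₊ + ⌊(-t)⁻¹⌋₊ + 1 := by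
    rw [inv_neg]
    have h_pos := Nat.lt_floor_add_one t⁻¹
    have h_neg := Nat.lt_floor_add_one (-t⁻¹)
    exact abs_le'.mpr ⟨by linarith [Nat.cast_nonneg (α := ℝ) ⌊-t⁻¹⌋₊],
      by linarith [Nat.cast_nonneg (α := ℝ) ⌊t⁻¹⌋₊]⟩
  rw [← enorm_inv ht, Real.enorm_eq_ofReal_abs]
  exact ENNReal.ofReal_le_of_le_toReal (by norm_cast at h_abs ⊢)

lemma mapeRatio_zero_left (t : ℝ) : mapeRatio 0 t = 1 := by
  rcases eq_or_ne t 0 with rfl | ht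
  · simp [mapeRatio]
  · simp [mapeRatio, ht]

-- In `ℝ≥0∞`, `a / 0 = ∞` for `a ≠ 0` but `0 / 0 = 0`, whereas `mapeRatio 0 0 = 1`.
lemma mapeRatio_eq_enorm_div {m t : ℝ} (h : m ≠ 0 ∨ t ≠ 0) :
    mapeRatio m t = ‖m - t‖ₑ / ‖t‖ₑ := by
  rcases eq_or_ne t 0 with rfl | ht
  · have hm : m ≠ 0 := h.resolve_right (not_not.mpr rfl)
    simp [mapeRatio, hm, ENNReal.div_zero]
  · rw [mapeRatio, if_neg ht, ENNReal.ofReal_div_of_pos (abs_pos.mpr ht),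
      Real.enorm_eq_ofReal_abs, Real.enorm_eq_ofReal_abs]

lemma mapeRatio_le (m t : ℝ) : mapeRatio m t ≤ ‖m‖ₑ * ‖t‖ₑ⁻¹ + 1 := by
  rcases eq_or_ne m 0 with rfl | hm
  · simp [mapeRatio_zero_left]
  calc mapeRatio m t = ‖m - t‖ₑ / ‖t‖ₑ := mapeRatio_eq_enorm_div (.inl hm)
    _ ≤ (‖m‖ₑ + ‖t‖ₑ) / ‖t‖ₑ := by gcongr; exact enorm_sub_le
    _ = ‖m‖ₑ * ‖t‖ₑ⁻¹ + ‖t‖ₑ / ‖t‖ₑ := by rw [ENNReal.add_div, ← div_eq_mul_inv]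
    _ ≤ ‖m‖ₑ * ‖t‖ₑ⁻¹ + 1 := by gcongr; exact ENNReal.div_self_le_one

lemma enorm_mul_inv_enorm_le_mapeRatio_add (m t : ℝ) :
    ‖m‖ₑ * ‖t‖ₑ⁻¹ ≤ mapeRatio m t + 1 := by
  rcases eq_or_ne m 0 with rfl | hm
  · simp [mapeRatio_zero_left]
  calc ‖m‖ₑ * ‖t‖ₑ⁻¹ = ‖(m - t) + t‖ₑ / ‖t‖ₑ := by rw [sub_add_cancel, div_eq_mul_inv]
    _ ≤ (‖m - t‖ₑ + ‖t‖ₑ) / ‖t‖ₑ := by gcongr; exact enorm_add_le _ _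
    _ = mapeRatio m t + ‖t‖ₑ / ‖t‖ₑ := by rw [ENNReal.add_div, mapeRatio_eq_enorm_div (.inl hm)]
    _ ≤ mapeRatio m t + 1 := by gcongr; exact ENNReal.div_self_le_one

section FiniteMeasure

variable {Ω : Type*} [MeasurableSpace Ω] {μ : Measure Ω} [IsFiniteMeasure μ]

lemma lintegral_lt_top_of_ae_le_add_const {f g : Ω → ℝ≥0∞} {c : ℝ≥0∞} (hc : c ≠ ⊤)
    (hfg : ∀ᵐ ω ∂μ, f ω ≤ g ω + c) (hg : ∫⁻ ω, g ω ∂μ < ⊤) : ∫⁻ ω, f ω ∂μ < ⊤ :=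
  calc ∫⁻ ω, f ω ∂μ ≤ ∫⁻ ω, g ω + c ∂μ := lintegral_mono_ae hfg
    _ = ∫⁻ ω, g ω ∂μ + c * μ univ := by
      rw [lintegral_add_right _ measurable_const, lintegral_const]
    _ < ⊤ := ENNReal.add_lt_top.mpr ⟨hg, ENNReal.mul_lt_top hc.lt_top (measure_lt_top μ univ)⟩

lemma lintegral_natCast_lt_top_iff_summable {N : Ω → ℕ} (hN : AEMeasurable N μ) :
    ∫⁻ ω, (N ω : ℝ≥0∞) ∂μ < ⊤ ↔ Summable fun k : ℕ => (k : ℝ) * μ.real (N ⁻¹' {k}) := by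
  have h_tsum : ∫⁻ ω, (N ω : ℝ≥0∞) ∂μ = ∑' k : ℕ, (k : ℝ≥0∞) * μ (N ⁻¹' {k}) := by
    rw [← lintegral_map' (f := fun k : ℕ => (k : ℝ≥0∞)) (by fun_prop) hN, lintegral_countable']
    simp_rw [Measure.map_apply_of_aemeasurable hN (measurableSet_singleton _)]
  have h_toReal (k : ℕ) :
      (k : ℝ) * μ.real (N ⁻¹' {k}) = ((k : ℝ≥0∞) * μ (N ⁻¹' {k})).toReal := by
    rw [ENNReal.toReal_mul, ENNReal.toReal_natCast, measureReal_def]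
  have h_ne_top (k : ℕ) : (k : ℝ≥0∞) * μ (N ⁻¹' {k}) ≠ ⊤ :=
    ENNReal.mul_ne_top (ENNReal.natCast_ne_top k) (measure_ne_top μ _)
  simp_rw [h_tsum, lt_top_iff_ne_top, h_toReal]
  refine ⟨ENNReal.summable_toReal, fun h_summable => ?_⟩
  simpa only [ENNReal.ofReal_toReal (h_ne_top _)] using h_summable.tsum_ofReal_ne_top

lemma lintegral_natFloor_inv_lt_top_iff_summable {T : Ω → ℝ} (hT : AEMeasurable T μ) :
    ∫⁻ ω, (⌊(T ω)⁻¹⌋₊ : ℝ≥0∞) ∂μ < ⊤ ↔ Summable fun k : ℕ =>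
      (k : ℝ) * μ.real {ω | T ω ∈ Ioc (1 / ((k : ℝ) + 1)) (1 / (k : ℝ))} := by
  refine (lintegral_natCast_lt_top_iff_summable
    (Nat.measurable_floor.comp_aemeasurable hT.inv)).trans ?_
  refine summable_congr fun k => ?_
  rcases eq_or_ne k 0 with rfl | hk
  · simp
  · simp only [← natFloor_inv_eq_iff hk]
    rfl

lemma lintegral_inv_enorm_lt_top_iff_natFloor {T : Ω → ℝ} (hT : AEMeasurable T μ) :
    ∫⁻ ω, ‖T ω‖ₑ⁻¹ ∂μ < ⊤ ↔ μ {ω | T ω = 0} = 0 ∧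
      ∫⁻ ω, (⌊(T ω)⁻¹⌋₊ : ℝ≥0∞) ∂μ < ⊤ ∧ ∫⁻ ω, (⌊(-T ω)⁻¹⌋₊ : ℝ≥0∞) ∂μ < ⊤ := by
  constructor
  · intro h_fin
    refine ⟨?_, (lintegral_mono fun ω => natFloor_inv_le_inv_enorm (T ω)).trans_lt h_fin,
      (lintegral_mono fun ω => ?_).trans_lt h_fin⟩
    · simpa only [ae_iff, Pi.inv_apply, ENNReal.inv_lt_top, enorm_pos, ne_eq, not_not] using
        ae_lt_top' hT.enorm.inv h_fin.ne
    · simpa only [enorm_neg] using natFloor_inv_le_inv_enorm (-T ω)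
  · rintro ⟨h_zero, h_pos, h_neg⟩
    have h_ne_zero : ∀ᵐ ω ∂μ, T ω ≠ 0 := by simpa only [ae_iff, not_not] using h_zero
    refine lintegral_lt_top_of_ae_le_add_const ENNReal.one_ne_top
      (h_ne_zero.mono fun ω => inv_enorm_le_natFloor_inv_add) ?_
    rw [lintegral_add_left' (by fun_prop)]
    exact ENNReal.add_lt_top.mpr ⟨h_pos, h_neg⟩

lemma lintegral_mapeRatio_zero_lt_top (T : Ω → ℝ) : ∫⁻ ω, mapeRatio 0 (T ω) ∂μ < ⊤ := by
  simp only [mapeRatio_zero_left, lintegral_one, measure_lt_top]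

lemma lintegral_mapeRatio_lt_top_iff_inv_enorm {m : ℝ} (hm : m ≠ 0) (T : Ω → ℝ) :
    ∫⁻ ω, mapeRatio m (T ω) ∂μ < ⊤ ↔ ∫⁻ ω, ‖T ω‖ₑ⁻¹ ∂μ < ⊤ := by
  have h_scale : ∫⁻ ω, ‖m‖ₑ * ‖T ω‖ₑ⁻¹ ∂μ < ⊤ ↔ ∫⁻ ω, ‖T ω‖ₑ⁻¹ ∂μ < ⊤ := by
    rw [lintegral_const_mul' _ _ enorm_ne_top]
    exact ⟨fun h => ENNReal.lt_top_of_mul_ne_top_right h.ne (enorm_ne_zero.mpr hm),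
      ENNReal.mul_lt_top enorm_lt_top⟩
  rw [← h_scale]
  exact ⟨lintegral_lt_top_of_ae_le_add_const ENNReal.one_ne_top
      (.of_forall fun ω => enorm_mul_inv_enorm_le_mapeRatio_add m (T ω)),
    lintegral_lt_top_of_ae_le_add_const ENNReal.one_ne_top
      (.of_forall fun ω => mapeRatio_le m (T ω))⟩

theorem mape_J_finite_iff_general {T : Ω → ℝ} (hT : AEMeasurable T μ) (m : ℝ) :
    ∫⁻ ω, mapeRatio m (T ω) ∂μ < ⊤ ↔ m = 0 ∨ (μ {ω | T ω = 0} = 0 ∧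
      Summable (fun k : ℕ =>
        (k : ℝ) * (μ {ω | T ω ∈ Ioc (1 / ((k : ℝ) + 1)) (1 / (k : ℝ))}).toReal) ∧
      Summable (fun k : ℕ =>
        (k : ℝ) * (μ {ω | T ω ∈ Ico (-(1 / (k : ℝ))) (-(1 / ((k : ℝ) + 1)))}).toReal)) := by
  rcases eq_or_ne m 0 with rfl | hm
  · simp only [lintegral_mapeRatio_zero_lt_top, true_or]
  have h_reflect (k : ℕ) (t : ℝ) : t ∈ Ico (-(1 / (k : ℝ))) (-(1 / ((k : ℝ) + 1))) ↔
      -t ∈ Ioc (1 / ((k : ℝ) + 1)) (1 / (k : ℝ)) := by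
    rw [mem_Ico, mem_Ioc, neg_le, lt_neg, and_comm]
  simp only [hm, false_or, h_reflect]
  rw [lintegral_mapeRatio_lt_top_iff_inv_enorm hm, lintegral_inv_enorm_lt_top_iff_natFloor hT,
    lintegral_natFloor_inv_lt_top_iff_summable hT,
    lintegral_natFloor_inv_lt_top_iff_summable hT.fun_neg]
  rfl

end FiniteMeasure

theorem mape_J_finite_iff {Ω : Type*} [MeasurableSpace Ω] (μ : Measure Ω)
    [IsProbabilityMeasure μ] (T : Ω → ℝ) (hT : Measurable T) (J : ℝ → ℝ≥0∞)
    (hJ : ∀ m : ℝ, J m = ∫⁻ ω, mapeRatio m (T ω) ∂μ) :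
    ((∀ m : ℝ, J m < ⊤) ↔
      (μ {ω | T ω = 0} = 0 ∧
       Summable (fun k : ℕ =>
         (k : ℝ) * (μ {ω | T ω ∈ Set.Ioc (1 / ((k : ℝ) + 1)) (1 / (k : ℝ))}).toReal) ∧
       Summable (fun k : ℕ =>
         (k : ℝ) * (μ {ω | T ω ∈ Set.Ico (-(1 / (k : ℝ))) (-(1 / ((k : ℝ) + 1)))}).toReal)))
    ∧
    (¬ (μ {ω | T ω = 0} = 0 ∧
       Summable (fun k : ℕ =>
         (k : ℝ) * (μ {ω | T ω ∈ Set.Ioc (1 / ((k : ℝ) + 1)) (1 / (k : ℝ))}).toReal) ∧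
       Summable (fun k : ℕ =>
         (k : ℝ) * (μ {ω | T ω ∈ Set.Ico (-(1 / (k : ℝ))) (-(1 / ((k : ℝ) + 1)))}).toReal)) →
      ∀ m : ℝ, m ≠ 0 → J m = ⊤) := by
  simp only [← not_lt_top_iff, hJ, mape_J_finite_iff_general hT.aemeasurable]
  exact ⟨⟨fun h => (h 1).resolve_left one_ne_zero, fun h _ => .inr h⟩,
    fun h m hm => not_or.mpr ⟨hm, h⟩⟩
end

section
/- Let T be a real-valued random variable such that P(T = 0) = 0 and such that J(m) = E(|m - T| / |T|) is finite for all real m. Then J is a convex function on ℝ, J(m) → +∞ as m → +∞ and as m → -∞ (J is coercive), and J attains a global minimum at some point of ℝ. -/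
open MeasureTheory ENNReal Filter Set

/-!
Everything happens in `ℝ≥0∞`. For fixed `t` the ratio `|m - t| / |t|` is a convex, lower
semicontinuous function of `m` that tends to `∞` at infinity, also for `t = 0`. Convexity survives
integration in `t`, and by Fatou's lemma so do lower semicontinuity and divergence at infinity. The
last two give a minimum, and when `J` is finite all conclusions pass to real values.
-/

open scoped NNReal Topology

section ConvexOn

variable {E : Type*} [AddCommMonoid E] [Module ℝ E] {s : Set E}

theorem convexOn_ennreal_ofReal {f : E → ℝ} (hf : ConvexOn ℝ s f) :
    ConvexOn ℝ≥0 s fun x ↦ ENNReal.ofReal (f x) := by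
  refine ⟨fun x hx y hy a b ha hb hab ↦ hf.1 hx hy ha hb (mod_cast hab),
    fun x hx y hy a b ha hb hab ↦ ?_⟩
  calc ENNReal.ofReal (f (a • x + b • y))
      ≤ ENNReal.ofReal (a * f x + b * f y) :=
        ENNReal.ofReal_le_ofReal (hf.2 hx hy ha hb (mod_cast hab))
    _ ≤ ENNReal.ofReal (a * f x) + ENNReal.ofReal (b * f y) := ENNReal.ofReal_add_le
    _ = a • ENNReal.ofReal (f x) + b • ENNReal.ofReal (f y) := by
        simp [ENNReal.ofReal_mul, ENNReal.smul_def]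

theorem convexOn_ennreal_toReal {f : E → ℝ≥0∞} (hf : ConvexOn ℝ≥0 s f)
    (hfin : ∀ x ∈ s, f x ≠ ∞) : ConvexOn ℝ s fun x ↦ (f x).toReal := by
  refine ⟨fun x hx y hy a b ha hb hab ↦ ?_, fun x hx y hy a b ha hb hab ↦ ?_⟩ <;>
    lift a to ℝ≥0 using ha <;> lift b to ℝ≥0 using hb <;> norm_cast at hab
  · exact hf.1 hx hy zero_le zero_le hab
  · have hax : a • f x ≠ ∞ := ENNReal.mul_ne_top ENNReal.coe_ne_top (hfin x hx)
    have hby : b • f y ≠ ∞ := ENNReal.mul_ne_top ENNReal.coe_ne_top (hfin y hy)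
    calc (f (a • x + b • y)).toReal
        ≤ (a • f x + b • f y).toReal :=
          ENNReal.toReal_mono (ENNReal.add_ne_top.2 ⟨hax, hby⟩)
            (hf.2 hx hy zero_le zero_le hab)
      _ = a • (f x).toReal + b • (f y).toReal := by
          rw [ENNReal.toReal_add hax hby, ENNReal.toReal_smul, ENNReal.toReal_smul]

end ConvexOn

theorem tendsto_ennreal_toReal_atTop {ι : Type*} {l : Filter ι} {f : ι → ℝ≥0∞}
    (hf : Tendsto f l (𝓝 ∞)) (hfin : ∀ᶠ i in l, f i ≠ ∞) :
    Tendsto (fun i ↦ (f i).toReal) l atTop := by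
  rw [← ENNReal.tendsto_ofReal_nhds_top]
  exact hf.congr' (hfin.mono fun i hi ↦ (ENNReal.ofReal_toReal hi).symm)

theorem exists_forall_le_of_tendsto_cocompact_nhds_top {X β : Type*} [TopologicalSpace X]
    [Nonempty X] [LinearOrder β] [OrderTop β] [TopologicalSpace β] [ClosedIicTopology β]
    {f : X → β} (hf : LowerSemicontinuous f)
    (htop : Tendsto f (cocompact X) (𝓝 ⊤)) : ∃ x₀, ∀ x, f x₀ ≤ f x := by
  by_cases! hfin : ∃ y, f y ≠ ⊤
  · obtain ⟨y, hy⟩ := hfin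
    obtain ⟨K, hK, hfK⟩ := mem_cocompact.1 (htop.eventually_const_lt hy.lt_top)
    have hlt : ∀ x ∉ K, f y < f x := fun x hx ↦ hfK hx
    have hyK : y ∈ K := by_contra fun h ↦ (hlt y h).false
    obtain ⟨x₀, -, hmin⟩ := (hf.lowerSemicontinuousOn K).exists_isMinOn ⟨y, hyK⟩ hK
    refine ⟨x₀, fun x ↦ ?_⟩
    by_cases hx : x ∈ K
    · exact hmin hx
    · exact (hmin hyK).trans (hlt x hx).le
  · exact ⟨Classical.arbitrary X, fun x ↦ (hfin x).symm ▸ le_top⟩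

section Lintegral

variable {Ω : Type*} [MeasurableSpace Ω] {μ : Measure Ω}

theorem convexOn_lintegral {E : Type*} [AddCommMonoid E] [SMul ℝ≥0 E] {s : Set E}
    {f : E → Ω → ℝ≥0∞} (hs : Convex ℝ≥0 s) (hmeas : ∀ x ∈ s, AEMeasurable (f x) μ)
    (hf : ∀ᵐ ω ∂μ, ConvexOn ℝ≥0 s (f · ω)) :
    ConvexOn ℝ≥0 s fun x ↦ ∫⁻ ω, f x ω ∂μ := by
  refine ⟨hs, fun x hx y hy a b ha hb hab ↦ ?_⟩
  calc ∫⁻ ω, f (a • x + b • y) ω ∂μ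
      ≤ ∫⁻ ω, (a • f x ω + b • f y ω) ∂μ :=
        lintegral_mono_ae (hf.mono fun ω hω ↦ hω.2 hx hy ha hb hab)
    _ = a • ∫⁻ ω, f x ω ∂μ + b • ∫⁻ ω, f y ω ∂μ := by
        have hax : AEMeasurable (fun ω ↦ a • f x ω) μ := (hmeas x hx).const_smul a
        rw [lintegral_add_left' hax]
        simp only [ENNReal.smul_def, smul_eq_mul, lintegral_const_mul' _ _ ENNReal.coe_ne_top]

theorem lowerSemicontinuous_lintegral {X : Type*} [TopologicalSpace X]
    [FirstCountableTopology X] {f : X → Ω → ℝ≥0∞} (hmeas : ∀ x, AEMeasurable (f x) μ)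
    (hf : ∀ᵐ ω ∂μ, LowerSemicontinuous (f · ω)) :
    LowerSemicontinuous fun x ↦ ∫⁻ ω, f x ω ∂μ := by
  refine lowerSemicontinuous_iff_le_liminf.2 fun x ↦ ?_
  calc ∫⁻ ω, f x ω ∂μ
      ≤ ∫⁻ ω, liminf (f · ω) (𝓝 x) ∂μ := lintegral_mono_ae (hf.mono fun ω hω ↦ hω.le_liminf x)
    _ ≤ liminf (fun y ↦ ∫⁻ ω, f y ω ∂μ) (𝓝 x) := lintegral_liminf_le' hmeas

theorem tendsto_lintegral_nhds_top [NeZero μ] {ι : Type*} {l : Filter ι}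
    [l.IsCountablyGenerated] {f : ι → Ω → ℝ≥0∞} (hmeas : ∀ i, AEMeasurable (f i) μ)
    (hf : ∀ᵐ ω ∂μ, Tendsto (f · ω) l (𝓝 ∞)) :
    Tendsto (fun i ↦ ∫⁻ ω, f i ω ∂μ) l (𝓝 ∞) := by
  obtain rfl | hl := l.eq_or_neBot
  · exact tendsto_bot
  refine tendsto_of_le_liminf_of_limsup_le ?_ le_top
  calc ∞ = ∫⁻ _, ∞ ∂μ := by simp [ENNReal.top_mul, NeZero.ne μ]
    _ = ∫⁻ ω, liminf (f · ω) l ∂μ := lintegral_congr_ae (hf.mono fun ω hω ↦ hω.liminf_eq.symm)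
    _ ≤ liminf (fun i ↦ ∫⁻ ω, f i ω ∂μ) l := lintegral_liminf_le' hmeas

end Lintegral

section MapeRatio

theorem mapeRatio_zero_right_of_ne_zero {m : ℝ} (hm : m ≠ 0) : mapeRatio m 0 = ∞ := by
  simp [mapeRatio, hm]

theorem mapeRatio_of_ne_zero {t : ℝ} (ht : t ≠ 0) (m : ℝ) :
    mapeRatio m t = ENNReal.ofReal (|m - t| / |t|) :=
  if_neg ht

theorem mapeRatio_zero_zero_le (m : ℝ) : mapeRatio 0 0 ≤ mapeRatio m 0 := by
  obtain rfl | hm := eq_or_ne m 0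
  · rfl
  · simp [mapeRatio_zero_right_of_ne_zero hm]

theorem measurable_mapeRatio (m : ℝ) : Measurable (mapeRatio m) :=
  Measurable.ite (measurableSet_singleton 0) measurable_const (by fun_prop)

theorem convexOn_mapeRatio_zero_right : ConvexOn ℝ≥0 univ (mapeRatio · 0) := by
  refine ⟨convex_univ, fun x _ y _ a b _ _ hab ↦ ?_⟩
  by_cases hz : a • x + b • y = 0
  · calc mapeRatio (a • x + b • y) 0
        = a • mapeRatio 0 0 + b • mapeRatio 0 0 := by rw [hz, ← add_smul, hab, one_smul]
      _ ≤ a • mapeRatio x 0 + b • mapeRatio y 0 := by gcongr <;> exact mapeRatio_zero_zero_le _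
  · have smul_eq_top {c : ℝ≥0} {m : ℝ} (h : c • m ≠ 0) : c • mapeRatio m 0 = ∞ := by
      obtain ⟨hc, hm⟩ := smul_ne_zero_iff.1 h
      simp [mapeRatio_zero_right_of_ne_zero hm, ENNReal.smul_top, hc]
    have hxy : a • x ≠ 0 ∨ b • y ≠ 0 := by
      contrapose! hz
      rw [hz.1, hz.2, add_zero]
    obtain hx | hy := hxy
    · simp [smul_eq_top hx]
    · simp [smul_eq_top hy]

theorem convexOn_mapeRatio (t : ℝ) : ConvexOn ℝ≥0 univ (mapeRatio · t) := by
  obtain rfl | ht := eq_or_ne t 0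
  · exact convexOn_mapeRatio_zero_right
  · simp only [mapeRatio_of_ne_zero ht, div_eq_inv_mul]
    exact convexOn_ennreal_ofReal
      ((convexOn_dist t convex_univ).smul (inv_nonneg.2 (abs_nonneg t)))

theorem lowerSemicontinuous_mapeRatio (t : ℝ) : LowerSemicontinuous (mapeRatio · t) := by
  obtain rfl | ht := eq_or_ne t 0
  · intro m c hc
    obtain rfl | hm := eq_or_ne m 0
    · exact .of_forall fun x ↦ hc.trans_le (mapeRatio_zero_zero_le x)
    · filter_upwards [eventually_ne_nhds hm] with x hx
      rwa [mapeRatio_zero_right_of_ne_zero hx, ← mapeRatio_zero_right_of_ne_zero hm]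
  · simp only [mapeRatio_of_ne_zero ht]
    exact (ENNReal.continuous_ofReal.comp (by fun_prop)).lowerSemicontinuous

theorem tendsto_mapeRatio_cocompact (t : ℝ) :
    Tendsto (mapeRatio · t) (cocompact ℝ) (𝓝 ∞) := by
  obtain rfl | ht := eq_or_ne t 0
  · refine tendsto_const_nhds.congr' ?_
    filter_upwards [isCompact_singleton.compl_mem_cocompact] with m hm
    exact (mapeRatio_zero_right_of_ne_zero hm).symm
  · simp only [mapeRatio_of_ne_zero ht]
    exact ENNReal.tendsto_ofReal_nhds_top.2
      ((tendsto_dist_right_cocompact_atTop t).atTop_div_const (abs_pos.2 ht))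

end MapeRatio

theorem mape_J_convex_coercive_has_min_general {Ω : Type*} [MeasurableSpace Ω] (μ : Measure Ω)
    [NeZero μ] (T : Ω → ℝ) (hT : AEMeasurable T μ)
    (J : ℝ → ℝ≥0∞) (hJ : ∀ m : ℝ, J m = ∫⁻ ω, mapeRatio m (T ω) ∂μ) :
    ConvexOn ℝ≥0 univ J ∧ Tendsto J atTop (𝓝 ∞) ∧ Tendsto J atBot (𝓝 ∞) ∧
      ∃ m₀ : ℝ, ∀ m : ℝ, J m₀ ≤ J m := by
  obtain rfl : J = fun m ↦ ∫⁻ ω, mapeRatio m (T ω) ∂μ := funext hJ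
  have hmeas (m : ℝ) : AEMeasurable (fun ω ↦ mapeRatio m (T ω)) μ :=
    (measurable_mapeRatio m).comp_aemeasurable hT
  have hconv := convexOn_lintegral convex_univ (fun m _ ↦ hmeas m)
    (ae_of_all μ fun ω ↦ convexOn_mapeRatio (T ω))
  have hlsc := lowerSemicontinuous_lintegral hmeas
    (ae_of_all μ fun ω ↦ lowerSemicontinuous_mapeRatio (T ω))
  have : (cocompact ℝ).IsCountablyGenerated := by
    rw [cocompact_eq_atBot_atTop]
    infer_instance
  have htop := tendsto_lintegral_nhds_top hmeas
    (ae_of_all μ fun ω ↦ tendsto_mapeRatio_cocompact (T ω))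
  exact ⟨hconv, htop.mono_left atTop_le_cocompact, htop.mono_left atBot_le_cocompact,
    exists_forall_le_of_tendsto_cocompact_nhds_top hlsc htop⟩

theorem mape_J_convex_coercive_has_min {Ω : Type*} [MeasurableSpace Ω] (μ : Measure Ω)
    [IsProbabilityMeasure μ] (T : Ω → ℝ) (hT : Measurable T)
    (h0 : μ {ω | T ω = 0} = 0)
    (J : ℝ → ℝ≥0∞) (hJ : ∀ m : ℝ, J m = ∫⁻ ω, mapeRatio m (T ω) ∂μ)
    (hfin : ∀ m : ℝ, J m < ⊤) :
    ConvexOn ℝ Set.univ (fun m : ℝ => (J m).toReal) ∧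
    Tendsto (fun m : ℝ => (J m).toReal) atTop atTop ∧
    Tendsto (fun m : ℝ => (J m).toReal) atBot atTop ∧
    ∃ m₀ : ℝ, ∀ m : ℝ, (J m₀).toReal ≤ (J m).toReal := by
  obtain ⟨hconv, htop, hbot, m₀, hmin⟩ :=
    mape_J_convex_coercive_has_min_general μ T hT.aemeasurable J hJ
  have hne (m : ℝ) : J m ≠ ∞ := (hfin m).ne
  exact ⟨convexOn_ennreal_toReal hconv fun m _ ↦ hne m,
    tendsto_ennreal_toReal_atTop htop (.of_forall hne),
    tendsto_ennreal_toReal_atTop hbot (.of_forall hne),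
    m₀, fun m ↦ ENNReal.toReal_mono (hne m) (hmin m)⟩
end

section
/- Let T be the random variable taking values in {1, 2, 3} with P(T = 1) = 0.3, P(T = 2) = 0.4 and P(T = 3) = 0.3, and let J(m) = E(|m - T| / |T|) = 0.3·|m - 1| + 0.4·|m - 2|/2 + 0.3·|m - 3|/3. Then J(m) = 0.4 for every m ∈ [1, 2]; in particular J has infinitely many global minimizers. -/
open Set

/-!
The loss `J` is a weighted sum of absolute deviations, with weight `P(T = t) / |t|` at `t`, that is
`0.3`, `0.2`, `0.1` at `1`, `2`, `3`. The weight at `1` balances the total weight at `2` and `3`,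
so every point of `[1, 2]` is a weighted median: there the slopes `+0.3`, `-0.2`, `-0.1` of the
three terms cancel. Replacing each `|m - t|` by `±(m - t)` with these signs gives a lower bound for
`J` which does not depend on `m` and which is attained on all of `[1, 2]`.
-/

theorem sum_mul_mul_sub_eq_neg_sum {ι R : Type*} [Fintype ι] [CommRing R] {w ε : ι → R}
    (hε : ∑ i, w i * ε i = 0) (x : ι → R) (m : R) :
    ∑ i, w i * (ε i * (m - x i)) = -∑ i, w i * ε i * x i := by
  simp only [← mul_assoc, mul_sub, Finset.sum_sub_distrib, ← Finset.sum_mul, hε, zero_mul, zero_sub]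

section WeightedAbsDev

variable {ι R : Type*} [Fintype ι] [CommRing R] [LinearOrder R] {w x ε : ι → R}

/-- The weighted sum of the absolute deviations of `m` from the points `x i`. The weights are not
normalized, so that the expected relative error `∑ i, p i * (|m - t i| / |t i|)` is the case
`w i = p i / |t i|`. -/
def weightedAbsDev (w x : ι → R) (m : R) : R :=
  ∑ i, w i * |m - x i|

theorem weightedAbsDev_eq_neg_sum {m : R} (hε : ∑ i, w i * ε i = 0)
    (hm : ∀ i, |m - x i| = ε i * (m - x i)) :
    weightedAbsDev w x m = -∑ i, w i * ε i * x i := by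
  simp only [weightedAbsDev, hm, sum_mul_mul_sub_eq_neg_sum hε]

theorem neg_sum_le_weightedAbsDev [IsOrderedRing R] (hw : ∀ i, 0 ≤ w i)
    (hε : ∑ i, w i * ε i = 0) (hε_le : ∀ i, |ε i| ≤ 1) (m : R) :
    -∑ i, w i * ε i * x i ≤ weightedAbsDev w x m := by
  rw [← sum_mul_mul_sub_eq_neg_sum hε x m]
  refine Finset.sum_le_sum fun i _ ↦ mul_le_mul_of_nonneg_left ?_ (hw i)
  calc
    ε i * (m - x i) ≤ |ε i| * |m - x i| := (le_abs_self _).trans_eq (abs_mul _ _)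
    _ ≤ |m - x i| := mul_le_of_le_one_left (abs_nonneg _) (hε_le i)

end WeightedAbsDev

theorem mape_discrete_counterexample (J : ℝ → ℝ)
    (hJ : ∀ m : ℝ, J m = 0.3 * |m - 1| + 0.4 * |m - 2| / 2 + 0.3 * |m - 3| / 3) :
    (∀ m ∈ Set.Icc (1:ℝ) 2, J m = 0.4) ∧
    {m : ℝ | ∀ m' : ℝ, J m ≤ J m'}.Infinite := by
  let w : Fin 3 → ℝ := ![0.3, 0.2, 0.1]
  let x : Fin 3 → ℝ := ![1, 2, 3]
  let ε : Fin 3 → ℝ := ![1, -1, -1]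
  have J_eq (m : ℝ) : J m = weightedAbsDev w x m := by
    simp only [hJ, weightedAbsDev, Fin.sum_univ_three, w, x, Matrix.cons_val]
    ring
  have balanced : ∑ i, w i * ε i = 0 := by
    norm_num [Fin.sum_univ_succ, w, ε]
  have bound_eq : -∑ i, w i * ε i * x i = 0.4 := by
    norm_num [Fin.sum_univ_succ, w, x, ε]
  have J_eq_on (m : ℝ) (hm : m ∈ Icc 1 2) : J m = 0.4 := by
    have abs_eq (i : Fin 3) : |m - x i| = ε i * (m - x i) := by
      match i with
      | 0 => simp [x, ε, hm.1]
      | 1 => simp [x, ε, abs_of_nonpos (sub_nonpos.2 hm.2)]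
      | 2 => simp [x, ε, abs_of_nonpos (show m - 3 ≤ 0 by linarith [hm.2])]
    rw [J_eq, weightedAbsDev_eq_neg_sum balanced abs_eq, bound_eq]
  have le_J (m : ℝ) : 0.4 ≤ J m := by
    have w_nonneg (i : Fin 3) : 0 ≤ w i := by fin_cases i <;> norm_num [w]
    have abs_ε_le (i : Fin 3) : |ε i| ≤ 1 := by fin_cases i <;> simp [ε]
    rw [J_eq, ← bound_eq]
    exact neg_sum_le_weightedAbsDev w_nonneg balanced abs_ε_le m
  exact ⟨J_eq_on, (Icc_infinite one_lt_two).mono fun m hm m' ↦ (J_eq_on m hm).trans_le (le_J m')⟩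
end

section
/- Let G be a class of functions from ℝ^d to ℝ with ‖G‖_∞ = sup_{g∈G} sup_x |g(x)| < ∞, and let Y_L > 0. For g ∈ G let h_g(x,y) = |g(x)-y|/|y| (the MAPE-loss function) and h'_g(x,y) = |g(x)-y| (the MAE-loss function), and let ‖·‖_∞^{Y_L} denote the supremum norm over ℝ^d × ((-∞,-Y_L] ∪ [Y_L,∞)) and ‖·‖_∞ the supremum norm over ℝ^d × ℝ. Then for every ε > 0, the ε-covering number of H(G, l_MAPE) = {h_g : g ∈ G} with respect to ‖·‖_∞^{Y_L} is at most the (ε·Y_L)-covering number of H(G, l_MAE) = {h'_g : g ∈ G} with respect to ‖·‖_∞. -/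
open ENNReal Set

/-- The `ε`-covering number of a class `F` with respect to an `ℝ≥0∞`-valued
dissimilarity `κ`: the size of the smallest finite subset `S ⊆ F` such that every
element of `F` is at dissimilarity `< ε` of some element of `S` (`⊤` if no such
finite cover exists). -/
noncomputable def coveringNumber {α : Type*} (ε : ℝ≥0∞) (F : Set α) (κ : α → α → ℝ≥0∞) : ℕ∞ :=
  sInf {n : ℕ∞ | ∃ S : Finset α, (S.card : ℕ∞) = n ∧ ↑S ⊆ F ∧
    ∀ f ∈ F, ∃ f' ∈ S, κ f f' < ε}

/-!
Division by `|y|` sends the absolute loss of `g` to its percentage loss, and on `YL ≤ |y|` it is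
Lipschitz with constant `1 / YL` for the supremum norms. The image of an `ε * YL`-cover is
therefore an `ε`-cover, with at most as many elements.
-/

theorem coveringNumber_image_le {α β : Type*} {κ : α → α → ℝ≥0∞} {κ' : β → β → ℝ≥0∞}
    {δ ε : ℝ≥0∞} {F : Set α} (T : α → β)
    (hT : ∀ f ∈ F, ∀ f' ∈ F, κ f f' < δ → κ' (T f) (T f') < ε) :
    coveringNumber ε (T '' F) κ' ≤ coveringNumber δ F κ := by
  classical
  refine le_sInf ?_
  rintro _ ⟨S, rfl, hSF, hcover⟩
  have hcard : ((S.image T).card : ℕ∞) ≤ S.card := mod_cast Finset.card_image_le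
  refine le_trans (sInf_le ⟨S.image T, rfl, ?_, ?_⟩) hcard
  · rw [Finset.coe_image]
    exact image_mono hSF
  · rintro _ ⟨f, hf, rfl⟩
    obtain ⟨f', hf', hlt⟩ := hcover f hf
    exact ⟨T f', Finset.mem_image_of_mem T hf', hT f hf f' (hSF hf') hlt⟩

theorem abs_div_sub_div_mul_le {K : Type*} [Field K] [LinearOrder K] [IsStrictOrderedRing K]
    {w c : K} (hc : c ≤ |w|) (a b : K) : |a / w - b / w| * c ≤ |a - b| :=
  calc |a / w - b / w| * c
      ≤ |a / w - b / w| * |w| := mul_le_mul_of_nonneg_left hc (abs_nonneg _)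
    _ = |a - b| / |w| * |w| := by rw [← sub_div, abs_div]
    _ ≤ |a - b| := mul_le_of_le_div₀ (abs_nonneg _) (abs_nonneg _) le_rfl

theorem iSup_ofReal_abs_div_sub_div_mul_le {ι P : Type*} {u : ι → P} {w : P → ℝ} {c : ℝ}
    (hw : ∀ i, c ≤ |w (u i)|) (h₁ h₂ : P → ℝ) :
    (⨆ i, ENNReal.ofReal |h₁ (u i) / w (u i) - h₂ (u i) / w (u i)|) * ENNReal.ofReal c
      ≤ ⨆ p, ENNReal.ofReal |h₁ p - h₂ p| := by
  rw [ENNReal.iSup_mul]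
  refine iSup_le fun i => ?_
  rw [← ENNReal.ofReal_mul (abs_nonneg _)]
  exact le_iSup_of_le (u i) (ENNReal.ofReal_le_ofReal (abs_div_sub_div_mul_le (hw i) _ _))

theorem coveringNumber_image_div_le {ι P : Type*} {u : ι → P} {w : P → ℝ} {c : ℝ}
    (hw : ∀ i, c ≤ |w (u i)|) (H : Set (P → ℝ)) (ε : ℝ≥0∞) :
    coveringNumber ε ((fun h p => h p / w p) '' H)
      (fun h₁ h₂ => ⨆ i, ENNReal.ofReal |h₁ (u i) - h₂ (u i)|)
    ≤ coveringNumber (ε * ENNReal.ofReal c) H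
      (fun h₁ h₂ => ⨆ p, ENNReal.ofReal |h₁ p - h₂ p|) :=
  coveringNumber_image_le _ fun h₁ _ h₂ _ hlt =>
    lt_of_mul_lt_mul_right' ((iSup_ofReal_abs_div_sub_div_mul_le hw h₁ h₂).trans_lt hlt)

theorem covering_number_MAPE_le_MAE_general {X E : Type*} [SeminormedAddCommGroup E]
    (G : Set (X → E)) (YL : ℝ) (ε : ℝ≥0∞) :
    coveringNumber ε
      ((fun g : X → E => fun p : X × E => ‖g p.1 - p.2‖ / ‖p.2‖) '' G)
      (fun h₁ h₂ => ⨆ q : X × {y : E // YL ≤ ‖y‖},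
        ENNReal.ofReal |h₁ (q.1, (q.2 : E)) - h₂ (q.1, (q.2 : E))|)
    ≤ coveringNumber (ε * ENNReal.ofReal YL)
      ((fun g : X → E => fun p : X × E => ‖g p.1 - p.2‖) '' G)
      (fun h₁ h₂ => ⨆ p : X × E, ENNReal.ofReal |h₁ p - h₂ p|) := by
  have hweight (q : X × {y : E // YL ≤ ‖y‖}) : YL ≤ |‖(q.2 : E)‖| := by
    rw [abs_norm]
    exact q.2.property
  have hcover := coveringNumber_image_div_le
    (u := fun q : X × {y : E // YL ≤ ‖y‖} => (q.1, (q.2 : E))) (w := fun p => ‖p.2‖) hweight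
    ((fun g : X → E => fun p : X × E => ‖g p.1 - p.2‖) '' G) ε
  rwa [image_image] at hcover

theorem covering_number_MAPE_le_MAE {d : ℕ} (G : Set ((Fin d → ℝ) → ℝ))
    (hG : ∃ B : ℝ, ∀ g ∈ G, ∀ x, |g x| ≤ B) (YL : ℝ) (hYL : 0 < YL) (ε : ℝ) (hε : 0 < ε) :
    coveringNumber (ENNReal.ofReal ε)
      ((fun g : (Fin d → ℝ) → ℝ => fun p : (Fin d → ℝ) × ℝ => |g p.1 - p.2| / |p.2|) '' G)
      (fun h₁ h₂ => ⨆ q : (Fin d → ℝ) × {y : ℝ // YL ≤ |y|},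
        ENNReal.ofReal |h₁ (q.1, (q.2 : ℝ)) - h₂ (q.1, (q.2 : ℝ))|)
    ≤ coveringNumber (ENNReal.ofReal (ε * YL))
      ((fun g : (Fin d → ℝ) → ℝ => fun p : (Fin d → ℝ) × ℝ => |g p.1 - p.2|) '' G)
      (fun h₁ h₂ => ⨆ p : (Fin d → ℝ) × ℝ, ENNReal.ofReal |h₁ p - h₂ p|) := by
  rw [ENNReal.ofReal_mul hε.le]
  exact covering_number_MAPE_le_MAE_general G YL (ENNReal.ofReal ε)
end

section
/- Let G be an arbitrary class of functions from ℝ^d to ℝ. Define H⁺(G, l) = { (x, y, t) ↦ 1_{t ≤ l(g(x), y)} : g ∈ G } as a class of {0,1}-valued functions on ℝ^d × ℝ × ℝ. Then the Vapnik–Chervonenkis dimension of H⁺(G, l_MAPE) is at most the Vapnik–Chervonenkis dimension of H⁺(G, l_MAE). -/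
open ENNReal Set

/-- A class `F` of boolean-valued functions shatters a finite set `s` if every
binary labeling of `s` is realized by some member of `F`. -/
def ShattersClass {Z : Type*} (F : Set (Z → Bool)) (s : Finset Z) : Prop :=
  ∀ θ : Z → Bool, ∃ f ∈ F, ∀ z ∈ s, f z = θ z

/-- The Vapnik–Chervonenkis dimension of a class of boolean-valued functions:
the supremum of the cardinalities of the finite sets it shatters. -/
noncomputable def vcDim {Z : Type*} (F : Set (Z → Bool)) : ℕ∞ :=
  sSup {n : ℕ∞ | ∃ s : Finset Z, (s.card : ℕ∞) = n ∧ ShattersClass F s}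

/-- The MAPE loss `|p - y| / |y|` with the conventions `a/0 = ∞` for `a ≠ 0`
and `0/0 = 1`, valued in `[0, ∞]`. -/
noncomputable def lMAPE (p y : ℝ) : ℝ≥0∞ :=
  if y = 0 then (if p = 0 then 1 else ⊤) else ENNReal.ofReal (|p - y| / |y|)

open scoped Topology

/-!
For `y ≠ 0` the MAPE test `t ≤ |p - y| / |y|` is the MAE test `t * |y| ≤ |p - y|`. For `y = 0` it
either always holds or says `p ≠ 0`; no MAE test says the latter for all `p`, but `τ ≤ |p - 0|` does
for the `p` in a finite set once `τ > 0` is small enough. Finitely many predictions suffice, because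
a shattered finite set is already shattered by finitely many members of the class.
-/

namespace ShattersClass

variable {Z Z' : Type*} {s : Finset Z}

theorem exists_finite_subset {F : Set (Z → Bool)} (hs : ShattersClass F s) :
    ∃ F₀ ⊆ F, F₀.Finite ∧ ShattersClass F₀ s := by
  classical
  choose f hfF hf using fun T : Finset Z => hs (fun z => decide (z ∈ T))
  refine ⟨f '' s.powerset, image_subset_iff.2 fun T _ => hfF T,
    s.powerset.finite_toSet.image f, fun θ => ?_⟩
  have hT : s.filter (fun z => θ z) ∈ s.powerset := Finset.mem_powerset.2 (s.filter_subset _)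
  refine ⟨_, mem_image_of_mem f hT, fun z hz => ?_⟩
  simp [hf _ z hz, hz]

theorem injOn_of_comp {F : Set (Z' → Bool)} {φ : Z → Z'}
    (hs : ShattersClass ((· ∘ φ) '' F) s) : InjOn φ s := by
  classical
  intro a ha b hb hab
  obtain ⟨_, ⟨f, -, rfl⟩, hf⟩ := hs (fun z => decide (z = b))
  have hfa : f (φ a) = decide (a = b) := hf a ha
  have hfb : f (φ b) = decide (b = b) := hf b hb
  simpa [hab, hfb] using hfa

theorem image_of_comp [DecidableEq Z'] {F : Set (Z' → Bool)} {φ : Z → Z'}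
    (hs : ShattersClass ((· ∘ φ) '' F) s) : ShattersClass F (s.image φ) := by
  intro θ
  obtain ⟨_, ⟨f, hfF, rfl⟩, hf⟩ := hs (θ ∘ φ)
  exact ⟨f, hfF, Finset.forall_mem_image.2 hf⟩

theorem card_le_vcDim {F : Set (Z → Bool)} (hs : ShattersClass F s) : (s.card : ℕ∞) ≤ vcDim F :=
  le_sSup ⟨s, rfl, hs⟩

theorem card_le_vcDim_of_comp {F : Set (Z' → Bool)} {φ : Z → Z'}
    (hs : ShattersClass ((· ∘ φ) '' F) s) : (s.card : ℕ∞) ≤ vcDim F := by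
  classical
  rw [← Finset.card_image_of_injOn hs.injOn_of_comp]
  exact hs.image_of_comp.card_le_vcDim

end ShattersClass

theorem vcDim_le_iff {Z : Type*} {F : Set (Z → Bool)} {n : ℕ∞} :
    vcDim F ≤ n ↔ ∀ s : Finset Z, ShattersClass F s → (s.card : ℕ∞) ≤ n :=
  ⟨fun h _ hs => hs.card_le_vcDim.trans h, fun h => sSup_le fun _ ⟨s, hcard, hs⟩ => hcard ▸ h s hs⟩

theorem vcDim_image_le_of_forall_finite {ι Z Z' : Type*} {G : Set ι} {h : ι → Z → Bool}
    {h' : ι → Z' → Bool}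
    (H : ∀ G₀ ⊆ G, G₀.Finite → ∀ z, ∃ z', ∀ g ∈ G₀, h' g z' = h g z) :
    vcDim (h '' G) ≤ vcDim (h' '' G) := by
  refine vcDim_le_iff.2 fun s hs => ?_
  obtain ⟨G₀, hG₀, hG₀fin, hsG₀⟩ := exists_subset_image_finite_and.1 hs.exists_finite_subset
  choose φ hφ using H G₀ hG₀ hG₀fin
  refine ShattersClass.card_le_vcDim_of_comp (φ := φ) fun θ => ?_
  obtain ⟨_, ⟨g, hg, rfl⟩, hgθ⟩ := hsG₀ θ
  exact ⟨_, mem_image_of_mem _ (mem_image_of_mem h' (hG₀ hg)),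
    fun z hz => (hφ z g hg).trans (hgθ z hz)⟩

theorem ofReal_le_lMAPE_iff_of_ne_zero {p y t : ℝ} (hy : y ≠ 0) :
    ENNReal.ofReal t ≤ lMAPE p y ↔ t * |y| ≤ |p - y| := by
  rw [lMAPE, if_neg hy, ENNReal.ofReal_le_ofReal_iff (by positivity), le_div_iff₀ (abs_pos.2 hy)]

theorem ofReal_le_lMAPE_zero_iff {p t : ℝ} : ENNReal.ofReal t ≤ lMAPE p 0 ↔ t ≤ 1 ∨ p ≠ 0 := by
  by_cases hp : p = 0 <;> simp [lMAPE, hp]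

theorem exists_forall_mem_le_abs_iff_ne_zero {A : Set ℝ} (hA : A.Finite) :
    ∃ τ : ℝ, ∀ a ∈ A, τ ≤ |a| ↔ a ≠ 0 := by
  have hev : ∀ᶠ τ in 𝓝[>] (0 : ℝ), ∀ a ∈ A, τ ≤ |a| ↔ a ≠ 0 := by
    refine (Filter.eventually_all_finite hA).2 fun a _ => ?_
    rcases eq_or_ne a 0 with rfl | ha
    · filter_upwards [self_mem_nhdsWithin] with τ hτ
      simpa using hτ
    · filter_upwards [Ioc_mem_nhdsGT (abs_pos.2 ha)] with τ hτ
      exact iff_of_true hτ.2 ha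
  exact hev.exists

theorem exists_forall_mem_le_abs_sub_iff_ofReal_le_lMAPE {A : Set ℝ} (hA : A.Finite) (y t : ℝ) :
    ∃ y' t' : ℝ, ∀ p ∈ A, t' ≤ |p - y'| ↔ ENNReal.ofReal t ≤ lMAPE p y := by
  rcases ne_or_eq y 0 with hy | rfl
  · exact ⟨y, t * |y|, fun p _ => (ofReal_le_lMAPE_iff_of_ne_zero hy).symm⟩
  simp only [ofReal_le_lMAPE_zero_iff]
  rcases le_or_gt t 1 with ht | ht
  · exact ⟨0, 0, fun p _ => iff_of_true (abs_nonneg _) (Or.inl ht)⟩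
  · obtain ⟨τ, hτ⟩ := exists_forall_mem_le_abs_iff_ne_zero hA
    exact ⟨0, τ, fun p hp => by simpa [ht.not_ge] using hτ p hp⟩

theorem vcDim_MAPE_le_vcDim_MAE_general {X : Type*} (G : Set (X → ℝ)) :
    vcDim ((fun g : X → ℝ =>
        fun v : X × ℝ × ℝ =>
          decide (ENNReal.ofReal v.2.2 ≤ lMAPE (g v.1) v.2.1)) '' G)
    ≤ vcDim ((fun g : X → ℝ =>
        fun v : X × ℝ × ℝ =>
          decide (v.2.2 ≤ |g v.1 - v.2.1|)) '' G) := by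
  refine vcDim_image_le_of_forall_finite fun G₀ _ hG₀ ⟨x, y, t⟩ => ?_
  obtain ⟨y', t', h⟩ :=
    exists_forall_mem_le_abs_sub_iff_ofReal_le_lMAPE (hG₀.image fun g => g x) y t
  exact ⟨(x, y', t'), fun g hg => decide_eq_decide.2 (h _ (mem_image_of_mem _ hg))⟩

theorem vcDim_MAPE_le_vcDim_MAE {d : ℕ} (G : Set ((Fin d → ℝ) → ℝ)) :
    vcDim ((fun g : (Fin d → ℝ) → ℝ =>
        fun v : (Fin d → ℝ) × ℝ × ℝ =>
          decide (ENNReal.ofReal v.2.2 ≤ lMAPE (g v.1) v.2.1)) '' G)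
    ≤ vcDim ((fun g : (Fin d → ℝ) → ℝ =>
        fun v : (Fin d → ℝ) × ℝ × ℝ =>
          decide (v.2.2 ≤ |g v.1 - v.2.1|)) '' G) :=
  vcDim_MAPE_le_vcDim_MAE_general G
end
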